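/- The nine vectors ξ₂′ (= η₁), η₂, η₃, ξ₅′ (= η₄), η₆, η₇, ξ₁′, ξ₃′, ξ₆′ are ℤ-linearly independent in ℂ⁶ and generate the same ℤ-submodule of ℂ⁶ as {η₁, η₂, η₃, η₄, η₅, η₆, η₇, η₈, η₉}; that is, they form a ℤ-basis of that submodule. -/

import Mathlib

open Complex

/-- The basis vectors `η₁, …, η₉` of the range of the Chern–Connes character `𝐓₄`. -/
noncomputable def η (θ : ℝ) : Fin 9 → Fin 6 → ℂ :=
  ![![1/2, 0, 0, 1/2, 0, 0],
    ![1/2, (1 - I)/4, 0, 0, 0, 0],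
    ![1/4, 1/4, 0, 1/4, 0, 0],
    ![1/2, 0, 0, 0, 1/2, 0],
    ![1/2, 0, (1 - I)/4, 0, 0, 0],
    ![1/4, 0, 1/4, 0, 1/4, 0],
    ![(θ : ℂ)/4, (1 + I)/8, (1 + I)/8, 1/8, 1/8, 1/4],
    ![(θ : ℂ)/4, (-1 + I)/8, (-1 + I)/8, -(1/8), -(1/8), -(1/4)],
    ![(θ : ℂ)/4, (-1 - I)/8, (-1 - I)/8, 1/8, 1/8, 1/4]]

/-- The images `ξ₁′, …, ξ₆′` of the generators of `K₀(A_θ ⋊ ℤ₂)` under `𝐓₄ ∘ ι⋆`. -/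
noncomputable def ξ' (θ : ℝ) : Fin 6 → Fin 6 → ℂ :=
  ![![1, 0, 0, 0, 0, 0],
    ![1/2, 0, 0, 1/2, 0, 0],
    ![1/2, 0, 0, 0, 0, 1/2],
    ![1/2, 0, 0, 0, 0, 1/2],
    ![1/2, 0, 0, 0, 1/2, 0],
    ![(θ : ℂ)/2, 0, 0, 1/4, -(1/4), 0]]

/-!
Over `ℝ` the nine new vectors satisfy, up to scaling, exactly one linear relation,
`2ξ₆′ - ξ₂′ + ξ₅′ = θξ₁′`. An integral relation is a real multiple of it, so a nonzero one would
make the ratio `-θ / 2` of two of its coefficients rational. For the spans, three integral relations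
express `ξ₁′`, `ξ₆′`, `ξ₃′` in turn through the `ηᵢ`, and they can be solved for `η₉`, `η₈`, `η₅`.
-/

theorem linearIndependent_int_of_ker_le_span_singleton {ι K E : Type*} [Fintype ι] [Field K]
    [CharZero K] [AddCommGroup E] [Module K E] {v : ι → E} {r : ι → K} {i j : ι}
    (hr : r i / r j ∉ Set.range ((↑) : ℚ → K))
    (hker : LinearMap.ker (Fintype.linearCombination K v) ≤ Submodule.span K {r}) :
    LinearIndependent ℤ v := by
  rw [Fintype.linearIndependent_iff]
  intro g hg
  have hg_ker : (fun k ↦ (g k : K)) ∈ LinearMap.ker (Fintype.linearCombination K v) := by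
    simpa [Fintype.linearCombination_apply, Int.cast_smul_eq_zsmul] using hg
  obtain ⟨t, ht⟩ := Submodule.mem_span_singleton.mp (hker hg_ker)
  have hgr (k : ι) : t * r k = g k := congrFun ht k
  have ht_zero : t = 0 := by
    by_contra ht_ne
    refine hr ⟨g i / g j, ?_⟩
    push_cast
    rw [← hgr, ← hgr, mul_div_mul_left _ _ ht_ne]
  intro k
  simpa [ht_zero, eq_comm] using hgr k

/-- The family of the theorem: `η` with `η₁`, `η₄` written as `ξ₂′`, `ξ₅′`, and with `η₅`, `η₈`,
`η₉` exchanged for `ξ₁′`, `ξ₃′`, `ξ₆′`. Subscripts in the text start at `1`, indices in the code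
at `0`. -/
noncomputable def newBasis (θ : ℝ) : Fin 9 → Fin 6 → ℂ :=
  ![ξ' θ 1, η θ 1, η θ 2, ξ' θ 4, η θ 5, η θ 6, ξ' θ 0, ξ' θ 2, ξ' θ 5]

section Independence

variable (θ : ℝ)

theorem linearCombination_newBasis (a : Fin 9 → ℝ) :
    Fintype.linearCombination ℝ (newBasis θ) a =
      ![⟨(a 0 + a 1 + a 3 + a 7) / 2 + (a 2 + a 4) / 4 + a 6 + θ * (a 5 / 4 + a 8 / 2), 0⟩,
        ⟨a 1 / 4 + a 2 / 4 + a 5 / 8, a 5 / 8 - a 1 / 4⟩,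
        ⟨a 4 / 4 + a 5 / 8, a 5 / 8⟩,
        ⟨a 0 / 2 + a 2 / 4 + a 5 / 8 + a 8 / 4, 0⟩,
        ⟨a 3 / 2 + a 4 / 4 + a 5 / 8 - a 8 / 4, 0⟩,
        ⟨a 5 / 4 + a 7 / 2, 0⟩] := by
  ext j
  fin_cases j <;> apply Complex.ext <;>
    simp [newBasis, η, ξ', Fintype.linearCombination_apply, Fin.sum_univ_succ, Fin.succ] <;> ring

/-- The coefficients, with respect to `newBasis θ`, of the real relation
`2ξ₆′ - ξ₂′ + ξ₅′ - θξ₁′ = 0`. -/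
def realRelation (θ : ℝ) : Fin 9 → ℝ :=
  ![-1, 0, 0, 1, 0, 0, -θ, 0, 2]

theorem ker_linearCombination_newBasis :
    LinearMap.ker (Fintype.linearCombination ℝ (newBasis θ)) =
      Submodule.span ℝ {realRelation θ} := by
  ext a
  rw [LinearMap.mem_ker, linearCombination_newBasis, Submodule.mem_span_singleton]
  constructor
  · intro h
    have h₀ : (a 0 + a 1 + a 3 + a 7) / 2 + (a 2 + a 4) / 4 + a 6 +
        θ * (a 5 / 4 + a 8 / 2) = 0 := congrArg re (congrFun h 0)
    have h₁ : a 1 / 4 + a 2 / 4 + a 5 / 8 = 0 := congrArg re (congrFun h 1)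
    have h₁' : a 5 / 8 - a 1 / 4 = 0 := congrArg im (congrFun h 1)
    have h₂ : a 4 / 4 + a 5 / 8 = 0 := congrArg re (congrFun h 2)
    have h₂' : a 5 / 8 = 0 := congrArg im (congrFun h 2)
    have h₃ : a 0 / 2 + a 2 / 4 + a 5 / 8 + a 8 / 4 = 0 := congrArg re (congrFun h 3)
    have h₄ : a 3 / 2 + a 4 / 4 + a 5 / 8 - a 8 / 4 = 0 := congrArg re (congrFun h 4)
    have h₅ : a 5 / 4 + a 7 / 2 = 0 := congrArg re (congrFun h 5)
    have ha₁ : a 1 = 0 := by linarith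
    have ha₂ : a 2 = 0 := by linarith
    have ha₄ : a 4 = 0 := by linarith
    have ha₅ : a 5 = 0 := by linarith
    have ha₇ : a 7 = 0 := by linarith
    have ha₀ : a 0 = -(a 8 / 2) := by linarith
    have ha₃ : a 3 = a 8 / 2 := by linarith
    have ha₆ : a 6 = -(a 8 / 2 * θ) := by
      rw [ha₀, ha₁, ha₂, ha₃, ha₄, ha₅, ha₇] at h₀
      linarith
    refine ⟨a 8 / 2, ?_⟩
    ext k
    fin_cases k <;> simp [realRelation, *]
  · rintro ⟨t, rfl⟩
    ext j
    fin_cases j <;> apply Complex.ext <;> simp [realRelation] <;> ring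

end Independence

theorem linearIndependent_newBasis {θ : ℝ} (hθ : Irrational θ) :
    LinearIndependent ℤ (newBasis θ) := by
  have hratio : Irrational (realRelation θ 6 / realRelation θ 8) := by
    simpa [realRelation] using hθ.neg.div_natCast two_ne_zero
  exact linearIndependent_int_of_ker_le_span_singleton hratio
    (ker_linearCombination_newBasis θ).le

section Span

variable (θ : ℝ)

theorem ξ'_one_eq_η_zero : ξ' θ 1 = η θ 0 := rfl

theorem ξ'_four_eq_η_three : ξ' θ 4 = η θ 3 := rfl

theorem ξ'_zero_eq :
    ξ' θ 0 = η θ 0 + η θ 1 - 2 • η θ 2 + η θ 3 + η θ 4 - 2 • η θ 5 + η θ 6 - η θ 8 := by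
  ext j
  fin_cases j <;> simp [η, ξ'] <;> ring

theorem ξ'_five_eq : ξ' θ 5 = η θ 2 - η θ 3 + η θ 5 + η θ 7 + η θ 8 := by
  ext j
  fin_cases j <;> simp [η, ξ'] <;> ring

theorem ξ'_two_eq : ξ' θ 2 = ξ' θ 0 - η θ 3 - ξ' θ 5 + η θ 6 + η θ 8 := by
  ext j
  fin_cases j <;> simp [η, ξ'] <;> ring

theorem range_newBasis :
    Set.range (newBasis θ) =
      {η θ 0, η θ 1, η θ 2, η θ 3, η θ 5, η θ 6, ξ' θ 0, ξ' θ 2, ξ' θ 5} := by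
  simp only [newBasis, ξ'_one_eq_η_zero, ξ'_four_eq_η_three, Matrix.range_cons, Matrix.range_empty,
    Set.union_empty, Set.singleton_union]

theorem range_newBasis_subset_span_η :
    Set.range (newBasis θ) ⊆ Submodule.span ℤ (Set.range (η θ)) := by
  set M := Submodule.span ℤ (Set.range (η θ))
  have hη (k : Fin 9) : η θ k ∈ M := Submodule.subset_span ⟨k, rfl⟩
  -- `with_reducible`: by default `assumption` would compare distinct vectors entry by entry.
  have hξ₀ : ξ' θ 0 ∈ M := by
    rw [ξ'_zero_eq]
    with_reducible apply_rules [add_mem, sub_mem, nsmul_mem]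
  have hξ₅ : ξ' θ 5 ∈ M := by
    rw [ξ'_five_eq]
    with_reducible apply_rules [add_mem, sub_mem]
  have hξ₂ : ξ' θ 2 ∈ M := by
    rw [ξ'_two_eq]
    with_reducible apply_rules [add_mem, sub_mem]
  simp [range_newBasis, Set.insert_subset_iff, hη, hξ₀, hξ₂, hξ₅]

theorem range_η_subset_span_newBasis :
    Set.range (η θ) ⊆ Submodule.span ℤ (Set.range (newBasis θ)) := by
  set N := Submodule.span ℤ (Set.range (newBasis θ))
  obtain ⟨hη₀, hη₁, hη₂, hη₃, hη₅, hη₆, hξ₀, hξ₂, hξ₅⟩ :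
      η θ 0 ∈ N ∧ η θ 1 ∈ N ∧ η θ 2 ∈ N ∧ η θ 3 ∈ N ∧ η θ 5 ∈ N ∧ η θ 6 ∈ N ∧
        ξ' θ 0 ∈ N ∧ ξ' θ 2 ∈ N ∧ ξ' θ 5 ∈ N := by
    have hsub : Set.range (newBasis θ) ⊆ N := Submodule.subset_span
    simpa only [range_newBasis, Set.insert_subset_iff, Set.singleton_subset_iff,
      SetLike.mem_coe] using hsub
  have hη₈ : η θ 8 ∈ N := by
    have h : η θ 8 = ξ' θ 2 - ξ' θ 0 + η θ 3 + ξ' θ 5 - η θ 6 := by rw [ξ'_two_eq]; abel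
    rw [h]
    with_reducible apply_rules [add_mem, sub_mem]
  have hη₇ : η θ 7 ∈ N := by
    have h : η θ 7 = ξ' θ 5 - η θ 2 + η θ 3 - η θ 5 - η θ 8 := by rw [ξ'_five_eq]; abel
    rw [h]
    with_reducible apply_rules [add_mem, sub_mem]
  have hη₄ : η θ 4 ∈ N := by
    have h : η θ 4 =
        ξ' θ 0 - η θ 0 - η θ 1 + 2 • η θ 2 - η θ 3 + 2 • η θ 5 - η θ 6 + η θ 8 := by
      rw [ξ'_zero_eq]
      abel
    rw [h]
    with_reducible apply_rules [add_mem, sub_mem, nsmul_mem]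
  rintro _ ⟨i, rfl⟩
  fin_cases i
  exacts [hη₀, hη₁, hη₂, hη₃, hη₄, hη₅, hη₆, hη₇, hη₈]

theorem span_range_newBasis :
    Submodule.span ℤ (Set.range (newBasis θ)) = Submodule.span ℤ (Set.range (η θ)) :=
  Submodule.span_eq_span (range_newBasis_subset_span_η θ) (range_η_subset_span_newBasis θ)

end Span

/-- The nine vectors `ξ₂′ (= η₁), η₂, η₃, ξ₅′ (= η₄), η₆, η₇, ξ₁′, ξ₃′, ξ₆′`
are ℤ-linearly independent and generate the same ℤ-submodule of ℂ⁶ as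
`{η₁, …, η₉}`: they form a ℤ-basis of that submodule. -/
theorem new_basis_for_eta_span (θ : ℝ) (hθ : Irrational θ) :
    LinearIndependent ℤ
      ![ξ' θ 1, η θ 1, η θ 2, ξ' θ 4, η θ 5, η θ 6, ξ' θ 0, ξ' θ 2, ξ' θ 5] ∧
    Submodule.span ℤ
        (Set.range ![ξ' θ 1, η θ 1, η θ 2, ξ' θ 4, η θ 5, η θ 6, ξ' θ 0, ξ' θ 2, ξ' θ 5])
      = Submodule.span ℤ (Set.range (η θ)) :=
  ⟨linearIndependent_newBasis hθ, span_range_newBasis θ⟩
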